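/- Fix D, K ∈ ℕ. Let p be a degree-K homogeneous polynomial in n variables whose coefficients are i.i.d. standard Gaussians. Then with probability at least 1 − n^{−Ω(DK)}, the squared norm of the coefficient vector of p^D satisfies ‖p^D‖² = Θ(n^{DK}). -/

import Mathlib

open MeasureTheory ProbabilityTheory MvPolynomial

/-- The degree-`K` homogeneous polynomial in `n` variables with coefficient
vector `a` indexed by degree-`K` monomials (multisets of size `K`). -/
noncomputable def polyOfCoeffs (n K : ℕ) (a : Sym (Fin n) K → ℝ) :
    MvPolynomial (Fin n) ℝ :=
  ∑ s : Sym (Fin n) K, monomial (Multiset.toFinsupp (Sym.toMultiset s)) (a s)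

/-- The squared Euclidean norm of the coefficient vector of a polynomial. -/
noncomputable def coeffNormSq (n : ℕ) (p : MvPolynomial (Fin n) ℝ) : ℝ :=
  ∑ m ∈ p.support, p.coeff m ^ 2


lemma fiber_sq {P B : Type*} [DecidableEq B] (S : Finset P) (f : P → B) (w : P → ℝ)
    (T : Finset B) (hT : ∀ x ∈ S, f x ∈ T) :
    ∑ b ∈ T, (∑ x ∈ S, if f x = b then w x else 0) ^ 2
      = ∑ x ∈ S, ∑ y ∈ S, if f x = f y then w x * w y else 0 := by
  simp_rw [sq, Finset.sum_mul_sum]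
  rw [Finset.sum_comm]
  refine Finset.sum_congr rfl fun x hx => ?_
  rw [Finset.sum_comm]
  refine Finset.sum_congr rfl fun y hy => ?_
  rw [Finset.sum_eq_single (f x)]
  · by_cases h : f x = f y
    · simp [h]
    · simp [h, Ne.symm h]
  · intro b _ hb
    simp [Ne.symm hb]
  · intro h
    exact absurd (hT x hx) h

lemma coeffNormSq_eq (n : ℕ) (p : MvPolynomial (Fin n) ℝ) (T : Finset (Fin n →₀ ℕ))
    (hT : p.support ⊆ T) : coeffNormSq n p = ∑ m ∈ T, p.coeff m ^ 2 := by
  unfold coeffNormSq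
  refine Finset.sum_subset hT fun m _ hm => ?_
  rw [notMem_support_iff.1 hm]; simp

lemma coeffNormSq_nonneg (n : ℕ) (p : MvPolynomial (Fin n) ℝ) : 0 ≤ coeffNormSq n p :=
  Finset.sum_nonneg fun _ _ => sq_nonneg _

lemma coeff_mul_supp (n : ℕ) (p q : MvPolynomial (Fin n) ℝ) (m : Fin n →₀ ℕ) :
    (p * q).coeff m = ∑ x ∈ p.support ×ˢ q.support,
      if x.1 + x.2 = m then p.coeff x.1 * q.coeff x.2 else 0 := by
  classical
  rw [coeff_mul, ← Finset.sum_filter]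
  symm
  apply Finset.sum_subset
  · intro x hx
    simp only [Finset.mem_filter] at hx
    simpa using hx.2
  · intro x hx hx'
    simp only [Finset.HasAntidiagonal.mem_antidiagonal] at hx
    simp only [Finset.mem_filter, Finset.mem_product, hx, and_true, mem_support_iff] at hx'
    by_contra h
    exact hx' ⟨left_ne_zero_of_mul h, right_ne_zero_of_mul h⟩

lemma coeffNormSq_mul_self (n : ℕ) (q : MvPolynomial (Fin n) ℝ) :
    coeffNormSq n q ^ 2 ≤ coeffNormSq n (q * q) := by
  classical
  set S := q.support with hS
  let φ : (Fin n →₀ ℕ) → (Fin n → ℤ) := fun u i => (u i : ℤ)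
  have hφ : ∀ u v u' v' : Fin n →₀ ℕ, (u + v = u' + v') ↔ (φ u - φ u' = φ v' - φ v) := by
    intro u v u' v'
    simp only [DFunLike.ext_iff, funext_iff, φ, Finsupp.add_apply, Pi.sub_apply]
    refine forall_congr' fun i => ?_
    omega
  let T₁ : Finset (Fin n →₀ ℕ) := (q * q).support ∪ (S ×ˢ S).image fun x => x.1 + x.2
  let T₂ : Finset (Fin n → ℤ) := insert 0 ((S ×ˢ S).image fun x => φ x.1 - φ x.2)
  have h1 : coeffNormSq n (q * q) = ∑ x ∈ S ×ˢ S, ∑ y ∈ S ×ˢ S,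
      if x.1 + x.2 = y.1 + y.2 then (q.coeff x.1 * q.coeff x.2) * (q.coeff y.1 * q.coeff y.2)
        else 0 := by
    rw [coeffNormSq_eq n (q * q) T₁ Finset.subset_union_left]
    simp_rw [coeff_mul_supp]
    exact fiber_sq (S ×ˢ S) (fun x => x.1 + x.2) (fun x => q.coeff x.1 * q.coeff x.2) T₁
      (fun x hx => Finset.mem_union_right _ (Finset.mem_image_of_mem _ hx))
  have h2 := fiber_sq (S ×ˢ S) (fun x => φ x.1 - φ x.2) (fun x => q.coeff x.1 * q.coeff x.2) T₂
      (fun x hx => Finset.mem_insert_of_mem (Finset.mem_image_of_mem _ hx))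
  have h3 : coeffNormSq n (q * q) = ∑ b ∈ T₂, (∑ x ∈ S ×ˢ S,
      if φ x.1 - φ x.2 = b then q.coeff x.1 * q.coeff x.2 else 0) ^ 2 := by
    rw [h1, h2]
    simp only [Finset.sum_product]
    refine Finset.sum_congr rfl fun u _ => ?_
    rw [Finset.sum_comm]
    refine Finset.sum_congr rfl fun u' _ => ?_
    rw [Finset.sum_comm]
    refine Finset.sum_congr rfl fun v' _ => ?_
    refine Finset.sum_congr rfl fun v _ => ?_
    by_cases h : u + v = u' + v'
    · rw [if_pos h, if_pos ((hφ _ _ _ _).1 h)]; ring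
    · rw [if_neg h, if_neg (fun h' => h ((hφ _ _ _ _).2 h'))]
  have h4 : (∑ x ∈ S ×ˢ S, if φ x.1 - φ x.2 = 0 then q.coeff x.1 * q.coeff x.2 else 0)
      = coeffNormSq n q := by
    rw [Finset.sum_product]
    refine Finset.sum_congr rfl fun u hu => ?_
    rw [Finset.sum_eq_single u]
    · simp [sq]
    · intro v _ hv
      rw [if_neg]
      intro h
      apply hv
      ext i
      have := congrFun h i
      simp only [φ, Pi.sub_apply, Pi.zero_apply] at this
      omega
    · intro h; exact absurd hu h
  rw [h3, ← h4]
  exact Finset.single_le_sum (f := fun b => (∑ x ∈ S ×ˢ S,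
      if φ x.1 - φ x.2 = b then q.coeff x.1 * q.coeff x.2 else 0) ^ 2)
    (fun _ _ => sq_nonneg _) (Finset.mem_insert_self _ _)

lemma card_antidiag_le (n : ℕ) (m : Fin n →₀ ℕ) :
    (Finset.HasAntidiagonal.antidiagonal m).card ≤ 2 ^ (m.sum fun _ e => e) := by
  classical
  calc (Finset.HasAntidiagonal.antidiagonal m).card ≤ (Finset.Iic m).card := by
        apply Finset.card_le_card_of_injOn Prod.fst
        · intro x hx
          simp only [Finset.coe_Iic, Set.mem_Iic]
          have : x.1 + x.2 = m := by simpa using hx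
          rw [← this]; exact le_self_add
        · intro x hx y hy h
          have hx : x.1 + x.2 = m := by simpa using hx
          have hy : y.1 + y.2 = m := by simpa using hy
          refine Prod.ext h ?_
          rw [← hy, h] at hx
          exact add_left_cancel hx
    _ = ∏ i ∈ m.support, (m i + 1) := by
        rw [Finsupp.card_Iic]; simp
    _ ≤ ∏ i ∈ m.support, 2 ^ (m i) :=
        Finset.prod_le_prod' fun i _ => Nat.lt_two_pow_self
    _ = _ := by rw [Finset.prod_pow_eq_pow_sum]; rfl

lemma coeffNormSq_mul_le (n d : ℕ) (p q : MvPolynomial (Fin n) ℝ)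
    (hd : p.totalDegree + q.totalDegree ≤ d) :
    coeffNormSq n (p * q) ≤ 2 ^ d * (coeffNormSq n p * coeffNormSq n q) := by
  classical
  have step : ∀ m ∈ (p * q).support, (p * q).coeff m ^ 2 ≤
      2 ^ d * ∑ x ∈ p.support ×ˢ q.support,
        if x.1 + x.2 = m then p.coeff x.1 ^ 2 * q.coeff x.2 ^ 2 else 0 := by
    intro m hm
    rw [coeff_mul_supp, ← Finset.sum_filter, ← Finset.sum_filter]
    refine sq_sum_le_card_mul_sum_sq.trans ?_
    simp_rw [mul_pow]
    refine mul_le_mul_of_nonneg_right ?_ (Finset.sum_nonneg fun _ _ => by positivity)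
    have h1 : ((p.support ×ˢ q.support).filter fun x => x.1 + x.2 = m).card ≤ 2 ^ d := by
      refine (Finset.card_le_card (t := Finset.HasAntidiagonal.antidiagonal m) ?_).trans
        ((card_antidiag_le n m).trans ?_)
      · intro x hx
        simpa using (Finset.mem_filter.1 hx).2
      · exact Nat.pow_le_pow_right (by norm_num)
          ((le_totalDegree hm).trans ((totalDegree_mul p q).trans hd))
    exact_mod_cast h1
  unfold coeffNormSq
  refine (Finset.sum_le_sum step).trans ?_
  rw [← Finset.mul_sum]
  refine mul_le_mul_of_nonneg_left ?_ (by positivity)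
  rw [Finset.sum_comm, Finset.sum_mul_sum,
    ← Finset.sum_product' (s := p.support) (t := q.support)]
  refine Finset.sum_le_sum fun x _ => ?_
  rw [Finset.sum_ite_eq]
  split_ifs
  · exact le_rfl
  · positivity

lemma coeffNormSq_one (n : ℕ) : coeffNormSq n 1 = 1 := by
  rw [coeffNormSq_eq n 1 {0}]
  · simp
  · intro m hm
    by_contra h
    simp at h
    simp at hm
    exact h hm

lemma coeffNormSq_pow_le (n K j : ℕ) (p : MvPolynomial (Fin n) ℝ) (hp : p.totalDegree ≤ K) :
    coeffNormSq n (p ^ j) ≤ (2 ^ (K * j)) ^ j * coeffNormSq n p ^ j := by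
  have key : ∀ i ≤ j, coeffNormSq n (p ^ i) ≤ (2 ^ (K * j)) ^ i * coeffNormSq n p ^ i := by
    intro i
    induction i with
    | zero => intro _; simp [coeffNormSq_one]
    | succ i ih =>
      intro hi
      have h := coeffNormSq_mul_le n (K * j) (p ^ i) p (by
        have := totalDegree_pow p i
        calc _ ≤ i * p.totalDegree + p.totalDegree := by omega
          _ = (i + 1) * p.totalDegree := by ring
          _ ≤ j * K := Nat.mul_le_mul hi hp
          _ = _ := mul_comm _ _)
      rw [pow_succ p]
      refine h.trans ?_
      have := mul_le_mul_of_nonneg_right (ih (by omega)) (coeffNormSq_nonneg n p)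
      calc _ ≤ (2:ℝ) ^ (K * j) * ((2 ^ (K * j)) ^ i * coeffNormSq n p ^ i * coeffNormSq n p) :=
            mul_le_mul_of_nonneg_left this (by positivity)
        _ = _ := by ring
  exact key j le_rfl

lemma coeffNormSq_pow_two_pow (n j : ℕ) (p : MvPolynomial (Fin n) ℝ) :
    coeffNormSq n p ^ (2 ^ j) ≤ coeffNormSq n (p ^ (2 ^ j)) := by
  induction j with
  | zero => simp
  | succ j ih =>
    have h := coeffNormSq_mul_self n (p ^ (2 ^ j))
    rw [← pow_add, ← two_mul, ← pow_succ'] at h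
    refine le_trans ?_ h
    rw [pow_succ, pow_mul]
    exact pow_le_pow_left₀ (pow_nonneg (coeffNormSq_nonneg n p) _) ih 2

lemma coeffNormSq_pow_ge (D K : ℕ) (hD : 0 < D) : ∃ c : ℝ, 0 < c ∧ ∀ (n : ℕ)
    (p : MvPolynomial (Fin n) ℝ), p.totalDegree ≤ K →
      c * coeffNormSq n p ^ D ≤ coeffNormSq n (p ^ D) := by
  set M := 2 ^ D with hM
  have hDM : D < M := Nat.lt_two_pow_self
  set B : ℝ := 2 ^ (M * K) * (2 ^ (K * (M - D))) ^ (M - D) with hB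
  have hB0 : 0 < B := by positivity
  refine ⟨B⁻¹, inv_pos.2 hB0, fun n p hp => ?_⟩
  have h0 := coeffNormSq_nonneg n p
  rcases h0.eq_or_lt with h | h
  · rw [← h, zero_pow hD.ne', mul_zero]; exact coeffNormSq_nonneg _ _
  · have h1 := coeffNormSq_pow_two_pow n D p
    rw [← hM] at h1
    have hsplit : M = D + (M - D) := by omega
    have h2 := coeffNormSq_mul_le n (M * K) (p ^ D) (p ^ (M - D)) (by
      have a := totalDegree_pow p D
      have b := totalDegree_pow p (M - D)
      calc _ ≤ D * p.totalDegree + (M - D) * p.totalDegree := by omega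
        _ = M * p.totalDegree := by rw [← add_mul, ← hsplit]
        _ ≤ _ := Nat.mul_le_mul_left _ hp)
    rw [← pow_add, ← hsplit] at h2
    have h3 := coeffNormSq_pow_le n K (M - D) p hp
    have h4 : coeffNormSq n p ^ D * coeffNormSq n p ^ (M - D) ≤
        B * coeffNormSq n (p ^ D) * coeffNormSq n p ^ (M - D) := by
      rw [← pow_add, ← hsplit]
      refine h1.trans (h2.trans ?_)
      calc _ ≤ (2:ℝ) ^ (M * K) * (coeffNormSq n (p ^ D) *
            ((2 ^ (K * (M - D))) ^ (M - D) * coeffNormSq n p ^ (M - D))) := by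
            have := coeffNormSq_nonneg n (p ^ D)
            gcongr
        _ = _ := by rw [hB]; ring
    have h5 := le_of_mul_le_mul_right h4 (by positivity)
    rw [inv_mul_le_iff₀ hB0]
    exact h5

lemma toFinsupp_sym_inj (n K : ℕ) : Function.Injective
    fun s : Sym (Fin n) K => Multiset.toFinsupp (Sym.toMultiset s) := by
  intro s t h
  exact Sym.coe_injective (Multiset.toFinsupp.injective h)

lemma coeffNormSq_polyOfCoeffs (n K : ℕ) (a : Sym (Fin n) K → ℝ) :
    coeffNormSq n (polyOfCoeffs n K a) = ∑ s, a s ^ 2 := by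
  classical
  have hc : ∀ m, (polyOfCoeffs n K a).coeff m = ∑ s : Sym (Fin n) K,
      if Multiset.toFinsupp (Sym.toMultiset s) = m then a s else 0 := by
    intro m
    unfold polyOfCoeffs
    rw [coeff_sum]
    simp_rw [coeff_monomial]
  rw [coeffNormSq_eq n _ (Finset.univ.image
    fun s : Sym (Fin n) K => Multiset.toFinsupp (Sym.toMultiset s)),
    Finset.sum_image ((toFinsupp_sym_inj n K).injOn)]
  · refine Finset.sum_congr rfl fun s _ => ?_
    rw [hc, Finset.sum_eq_single s]
    · simp
    · intro t _ ht
      rw [if_neg]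
      exact fun h => ht (toFinsupp_sym_inj n K h)
    · simp
  · intro m hm
    by_contra h
    rw [mem_support_iff, hc] at hm
    apply hm
    refine Finset.sum_eq_zero fun s _ => ?_
    rw [if_neg]
    rintro rfl
    exact h (Finset.mem_image_of_mem _ (Finset.mem_univ _))

lemma totalDegree_polyOfCoeffs (n K : ℕ) (a : Sym (Fin n) K → ℝ) :
    (polyOfCoeffs n K a).totalDegree ≤ K := by
  unfold polyOfCoeffs
  refine totalDegree_finsetSum_le fun s _ => ?_
  refine (totalDegree_monomial_le _ _).trans ?_
  have := Multiset.toFinsupp_sum_eq (Sym.toMultiset s)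
  have h2 : Multiset.card (Sym.toMultiset s) = K := s.2
  rw [h2] at this
  exact this.le

lemma card_sym_bounds (n K : ℕ) :
    Fintype.card (Sym (Fin n) K) ≤ n ^ K ∧
      n ^ K ≤ K.factorial * Fintype.card (Sym (Fin n) K) := by
  classical
  constructor
  · have h := Fintype.card_le_of_surjective (fun v : List.Vector (Fin n) K => Sym.ofVector v) (by
      rintro ⟨s, hs⟩
      induction s using Quotient.inductionOn with
      | h l => exact ⟨⟨l, by simpa using hs⟩, rfl⟩)
    simpa using h
  · rw [Sym.card_sym_eq_choose, Fintype.card_fin, ← Nat.ascFactorial_eq_factorial_mul_choose']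
    exact Nat.pow_succ_le_ascFactorial n K

lemma sq_memLp : MemLp (fun x : ℝ => x ^ 2) 2 (gaussianReal 0 1) := by
  have h := (memLp_id_gaussianReal' (μ := 0) (v := 1) 4 (by simp))
  have h2 := h.norm_rpow_div 2
  have : (4 / 2 : ENNReal) = 2 := by
    rw [show (4 : ENNReal) = 2 * 2 by norm_num]
    exact ENNReal.mul_div_cancel_right (by norm_num) (by norm_num)
  rw [this] at h2
  refine h2.congr_norm (by fun_prop) ?_
  refine Filter.Eventually.of_forall fun x => ?_
  simp

lemma integral_sq_gauss : ∫ x : ℝ, x ^ 2 ∂(gaussianReal 0 1) = 1 := by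
  have h := variance_eq_sub (μ := gaussianReal 0 1) (X := id)
    (memLp_id_gaussianReal' 2 (by simp))
  rw [variance_id_gaussianReal] at h
  simp at h
  exact h.symm

lemma chi_square {ι : Type*} [Fintype ι] [Nonempty ι] :
    (Measure.pi fun _ : ι => gaussianReal 0 1)
      {a | (Fintype.card ι : ℝ) / 2 ≤ |∑ i, a i ^ 2 - Fintype.card ι|} ≤
    ENNReal.ofReal (4 * Var[fun x : ℝ => x ^ 2; gaussianReal 0 1] / Fintype.card ι) := by
  set μ : Measure (ι → ℝ) := Measure.pi fun _ : ι => gaussianReal 0 1 with hμ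
  have hN : (0:ℝ) < Fintype.card ι := by exact_mod_cast Fintype.card_pos
  have hi : ∀ i : ι, MemLp (fun a : ι → ℝ => a i ^ 2) 2 μ := fun i =>
    sq_memLp.comp_measurePreserving (measurePreserving_eval (fun _ : ι => gaussianReal 0 1) i)
  have hv : Var[∑ i, fun a : ι → ℝ => a i ^ 2; μ]
      = Fintype.card ι * Var[fun x : ℝ => x ^ 2; gaussianReal 0 1] := by
    rw [hμ, variance_sum_pi (X := fun _ x => x ^ 2) (fun _ => sq_memLp)]
    simp
  have hm : μ[(∑ i, fun a : ι → ℝ => a i ^ 2 : (ι → ℝ) → ℝ)] = (Fintype.card ι : ℝ) := by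
    have : (∑ i, fun a : ι → ℝ => a i ^ 2) = fun a => ∑ i, a i ^ 2 := by
      ext; simp
    rw [this, integral_finsetSum _ fun i _ => (hi i).integrable (by norm_num)]
    have h1 : ∀ i : ι, ∫ a : ι → ℝ, a i ^ 2 ∂μ = 1 := fun i => by
      rw [← integral_sq_gauss]
      exact integral_comp_eval (μ := fun _ : ι => gaussianReal 0 1) (i := i)
        (f := fun x : ℝ => x ^ 2) (by fun_prop)
    simp [h1]
  have h := meas_ge_le_variance_div_sq (μ := μ) (X := ∑ i, fun a : ι → ℝ => a i ^ 2)
    (memLp_finsetSum' _ fun i _ => hi i) (c := (Fintype.card ι : ℝ) / 2) (by positivity)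
  rw [hm, hv] at h
  simp only [Finset.sum_apply] at h
  convert h using 2
  field_simp
  ring

/-- Norm of powers of a random polynomial: for fixed `D, K ≥ 1`, if the
coefficients of a degree-`K` homogeneous polynomial `p` in `n` variables are
i.i.d. standard Gaussians, then with probability at least `1 − n^{−Ω(DK)}` one
has `‖p^D‖² = Θ(n^{DK})`. -/
theorem norm_of_polynomial_powers (D K : ℕ) (hD : 0 < D) (hK : 0 < K) :
    ∃ c C c' : ℝ, 0 < c ∧ 0 < C ∧ 0 < c' ∧ ∃ N₀ : ℕ, ∀ n : ℕ, N₀ ≤ n →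
      (Measure.pi fun _ : Sym (Fin n) K => gaussianReal 0 1)
        {a | c * (n : ℝ) ^ (D * K) ≤ coeffNormSq n (polyOfCoeffs n K a ^ D) ∧
             coeffNormSq n (polyOfCoeffs n K a ^ D) ≤ C * (n : ℝ) ^ (D * K)}
        ≥ ENNReal.ofReal (1 - (n : ℝ) ^ (-(c' * ((D * K : ℕ) : ℝ)))) := by
  obtain ⟨c₀, hc₀, hlow⟩ := coeffNormSq_pow_ge D K hD
  set V : ℝ := Var[fun x : ℝ => x ^ 2; gaussianReal 0 1] with hV
  have hV0 : 0 ≤ V := variance_nonneg _ _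
  have hf : (0:ℝ) < K.factorial := by exact_mod_cast K.factorial_pos
  have hDr : (0:ℝ) < D := by exact_mod_cast hD
  refine ⟨c₀ * (1 / (2 * K.factorial)) ^ D, (2 ^ (K * D)) ^ D * 2 ^ D, 1 / (2 * D),
    by positivity, by positivity, by positivity,
    max 1 ⌈(4 * V * K.factorial) ^ 2⌉₊, fun n hn => ?_⟩
  have hn1 : 1 ≤ n := (le_max_left _ _).trans hn
  have hn2 : (4 * V * K.factorial) ^ 2 ≤ (n : ℝ) :=
    Nat.ceil_le.1 ((le_max_right _ _).trans hn)
  have hnr : (1:ℝ) ≤ n := by exact_mod_cast hn1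
  have hn0 : (0:ℝ) < n := by linarith
  have : Nonempty (Fin n) := ⟨⟨0, hn1⟩⟩
  obtain ⟨hcu', hcl'⟩ := card_sym_bounds n K
  set N := Fintype.card (Sym (Fin n) K) with hN
  have hcu : (N : ℝ) ≤ (n:ℝ) ^ K := by exact_mod_cast hcu'
  have hcl : (n:ℝ) ^ K ≤ K.factorial * N := by exact_mod_cast hcl'
  have hnK : (0:ℝ) < (n:ℝ) ^ K := by positivity
  have hN0 : (0:ℝ) < N := by
    by_contra h
    have : (K.factorial : ℝ) * N ≤ 0 := mul_nonpos_of_nonneg_of_nonpos hf.le (not_lt.1 h)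
    linarith
  have : Nonempty (Sym (Fin n) K) := Fintype.card_pos_iff.1 (by exact_mod_cast hN0)
  have hchi := chi_square (ι := Sym (Fin n) K)
  rw [← hN, ← hV] at hchi
  set μ := (Measure.pi fun _ : Sym (Fin n) K => gaussianReal 0 1) with hμ
  set G := {a : Sym (Fin n) K → ℝ |
    c₀ * (1 / (2 * (K.factorial : ℝ))) ^ D * (n : ℝ) ^ (D * K)
      ≤ coeffNormSq n (polyOfCoeffs n K a ^ D) ∧
    coeffNormSq n (polyOfCoeffs n K a ^ D) ≤ (2 ^ (K * D)) ^ D * 2 ^ D * (n : ℝ) ^ (D * K)} with hG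
  set Bad := {a : Sym (Fin n) K → ℝ | (N : ℝ) / 2 ≤ |∑ i, a i ^ 2 - N|} with hBad
  have hcover : (Set.univ : Set (Sym (Fin n) K → ℝ)) ⊆ G ∪ Bad := by
    intro a _
    by_cases ha : a ∈ Bad
    · exact Or.inr ha
    left
    have ha' : |∑ i, a i ^ 2 - (N:ℝ)| < N / 2 := not_le.1 ha
    obtain ⟨h1, h2⟩ := abs_lt.1 ha'
    have hdeg := totalDegree_polyOfCoeffs n K a
    have hl := hlow n (polyOfCoeffs n K a) hdeg
    have hu := coeffNormSq_pow_le n K D (polyOfCoeffs n K a) hdeg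
    rw [coeffNormSq_polyOfCoeffs] at hl hu
    have hpow : (n:ℝ) ^ (D * K) = ((n:ℝ) ^ K) ^ D := by rw [← pow_mul, mul_comm]
    have hs0 : (0:ℝ) ≤ ∑ i, a i ^ 2 := Finset.sum_nonneg fun _ _ => sq_nonneg _
    constructor
    · refine le_trans ?_ hl
      rw [hpow, mul_assoc, ← mul_pow]
      have : 1 / (2 * (K.factorial : ℝ)) * (n:ℝ) ^ K ≤ ∑ i, a i ^ 2 := by
        rw [div_mul_eq_mul_div, div_le_iff₀ (by positivity)]
        nlinarith
      gcongr
    · refine hu.trans ?_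
      rw [hpow, mul_assoc ((2 ^ (K * D)) ^ D : ℝ), ← mul_pow 2]
      have : ∑ i, a i ^ 2 ≤ 2 * (n:ℝ) ^ K := by linarith
      gcongr
  have hone : 1 ≤ μ G + μ Bad := by
    rw [← measure_univ (μ := μ)]
    exact (measure_mono hcover).trans (measure_union_le _ _)
  have hexp : -(1 / (2 * (D:ℝ)) * ((D * K : ℕ) : ℝ)) = -((K:ℝ) / 2) := by
    push_cast; field_simp
  have hreal : 4 * V / N ≤ (n:ℝ) ^ (-(1 / (2 * (D:ℝ)) * ((D * K : ℕ) : ℝ))) := by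
    rw [hexp, Real.rpow_neg hn0.le]
    set r := (n:ℝ) ^ ((K:ℝ) / 2) with hr
    have hr0 : 0 < r := Real.rpow_pos_of_pos hn0 _
    have hrr : r * r = (n:ℝ) ^ K := by
      rw [hr, ← Real.rpow_add hn0, add_halves, Real.rpow_natCast]
    have hrn : (n:ℝ) ≤ r * r := by rw [hrr]; exact le_self_pow₀ hnr hK.ne'
    have hle : 4 * V * K.factorial ≤ r := by
      refine (sq_le_sq₀ (by positivity) hr0.le).1 ?_
      rw [sq r]; exact hn2.trans hrn
    rw [← one_div, div_le_div_iff₀ hN0 hr0, one_mul]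
    have h1 : 4 * V * K.factorial * r ≤ K.factorial * N :=
      (mul_le_mul_of_nonneg_right hle hr0.le).trans (hrr.le.trans hcl)
    nlinarith
  have hbad : μ Bad ≤ ENNReal.ofReal ((n:ℝ) ^ (-(1 / (2 * (D:ℝ)) * ((D * K : ℕ) : ℝ)))) :=
    hchi.trans (ENNReal.ofReal_le_ofReal hreal)
  change _ ≤ μ G
  rw [ENNReal.ofReal_sub _ (Real.rpow_nonneg hn0.le _), ENNReal.ofReal_one, tsub_le_iff_right]
  exact hone.trans (by gcongr)
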